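/- Let m be a natural number with m ≥ 1. Then ∫_ℝ x/((x−i)^{m+2}·(x+i)^m) dx = (2πi/(m+1)!) · g^{(m+1)}(i), where g : ℂ → ℂ is g(z) = z/(z+i)^m. -/

import Mathlib

open MeasureTheory Complex

lemma aux_nem (x : ℝ) : (x : ℂ) - I ≠ 0 := by
  intro h; have := congrArg Complex.im h; simp at this

lemma aux_nep (x : ℝ) : (x : ℂ) + I ≠ 0 := by
  intro h; have := congrArg Complex.im h; simp at this

noncomputable def auxf (a b : ℕ) (x : ℝ) : ℂ := (((x : ℂ) - I) ^ a)⁻¹ * (((x : ℂ) + I) ^ b)⁻¹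

lemma aux_normp (x : ℝ) : ‖(x : ℂ) + I‖ = Real.sqrt (1 + x ^ 2) := by
  rw [Complex.norm_def, Complex.normSq_apply]; simp; ring_nf

lemma aux_normm (x : ℝ) : ‖(x : ℂ) - I‖ = Real.sqrt (1 + x ^ 2) := by
  rw [Complex.norm_def, Complex.normSq_apply]; simp; ring_nf

lemma auxf_norm (a b : ℕ) (x : ℝ) : ‖auxf a b x‖ = (Real.sqrt (1 + x ^ 2))⁻¹ ^ (a + b) := by
  rw [auxf, norm_mul, norm_inv, norm_inv, norm_pow, norm_pow, aux_normp, aux_normm, pow_add,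
    inv_pow, inv_pow]

lemma aux_one_le (x : ℝ) : 1 ≤ Real.sqrt (1 + x ^ 2) := by
  rw [Real.one_le_sqrt]; nlinarith [sq_nonneg x]

lemma auxf_cont (a b : ℕ) : Continuous (auxf a b) := by
  unfold auxf
  refine Continuous.mul (Continuous.inv₀ (by fun_prop) ?_) (Continuous.inv₀ (by fun_prop) ?_)
  · exact fun x => pow_ne_zero _ (aux_nem x)
  · exact fun x => pow_ne_zero _ (aux_nep x)

lemma auxf_int (a b : ℕ) (h : 2 ≤ a + b) : Integrable (auxf a b) := by
  refine Integrable.mono' integrable_inv_one_add_sq (auxf_cont a b).aestronglyMeasurable ?_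
  refine Filter.Eventually.of_forall fun x => ?_
  rw [auxf_norm]
  have h1 := aux_one_le x
  calc _ ≤ (Real.sqrt (1 + x ^ 2))⁻¹ ^ 2 :=
        pow_le_pow_of_le_one (by positivity) (inv_le_one_of_one_le₀ h1) h
    _ = _ := by rw [inv_pow, Real.sq_sqrt (by positivity)]

lemma auxf_bd (a b : ℕ) (h : 1 ≤ a + b) {x : ℝ} (hx : x ≠ 0) : ‖auxf a b x‖ ≤ |x|⁻¹ := by
  rw [auxf_norm]
  have h1 := aux_one_le x
  calc _ ≤ (Real.sqrt (1 + x ^ 2))⁻¹ ^ 1 :=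
        pow_le_pow_of_le_one (by positivity) (inv_le_one_of_one_le₀ h1) h
    _ ≤ _ := by
      rw [pow_one]
      apply inv_anti₀ (abs_pos.2 hx)
      apply Real.abs_le_sqrt
      linarith

lemma auxf_top (a b : ℕ) (h : 1 ≤ a + b) : Filter.Tendsto (auxf a b) Filter.atTop (nhds 0) := by
  refine squeeze_zero_norm' ?_ (tendsto_inv_atTop_zero.comp Filter.tendsto_abs_atTop_atTop)
  filter_upwards [Filter.eventually_gt_atTop 0] with x hx
  exact auxf_bd a b h hx.ne'

lemma auxf_bot (a b : ℕ) (h : 1 ≤ a + b) : Filter.Tendsto (auxf a b) Filter.atBot (nhds 0) := by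
  refine squeeze_zero_norm' ?_ (tendsto_inv_atTop_zero.comp Filter.tendsto_abs_atBot_atTop)
  filter_upwards [Filter.eventually_lt_atBot 0] with x hx
  exact auxf_bd a b h hx.ne

lemma aux_dinv (c : ℂ) (n : ℕ) (z : ℂ) (h : z + c ≠ 0) :
    HasDerivAt (fun z : ℂ => ((z + c) ^ n)⁻¹) (-n * ((z + c) ^ (n + 1))⁻¹) z := by
  have h1 := (((hasDerivAt_id z).add_const c).pow n).inv (pow_ne_zero n h)
  refine h1.congr_deriv ?_
  rcases n with _ | n
  · simp
  · simp only [id, Pi.pow_apply]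
    push_cast
    field_simp
    ring

lemma auxf_deriv (a b : ℕ) (x : ℝ) :
    HasDerivAt (auxf a b) (-a * auxf (a + 1) b x + -b * auxf a (b + 1) x) x := by
  have h1 := (aux_dinv (-I) a x (by simpa [sub_eq_add_neg] using aux_nem x)).comp_ofReal
  have h2 := (aux_dinv I b x (aux_nep x)).comp_ofReal
  have h3 := h1.mul h2
  refine (h3.congr_deriv ?_)
  simp only [auxf, ← sub_eq_add_neg]
  ring

lemma auxf_rec (a b : ℕ) (h : 1 ≤ a + b) :
    (a : ℂ) * ∫ x, auxf (a + 1) b x = -b * ∫ x, auxf a (b + 1) x := by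
  have i1 : Integrable (fun x => -(a : ℂ) * auxf (a + 1) b x) :=
    (auxf_int (a + 1) b (by omega)).const_mul _
  have i2 : Integrable (fun x => -(b : ℂ) * auxf a (b + 1) x) :=
    (auxf_int a (b + 1) (by omega)).const_mul _
  have := integral_of_hasDerivAt_of_tendsto (auxf_deriv a b) (i1.add i2)
    (auxf_bot a b h) (auxf_top a b h)
  rw [integral_add i1 i2, integral_const_mul, integral_const_mul] at this
  linear_combination -this

lemma auxf_one (b : ℕ) : ∫ x, auxf 1 (b + 1) x = 2 * (Real.pi : ℂ) * I * ((I + I) ^ (b + 1))⁻¹ := by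
  induction b with
  | zero =>
    have : ∀ x, auxf 1 1 x = (((1 + x ^ 2)⁻¹ : ℝ) : ℂ) := by
      intro x
      rw [auxf, ← mul_inv]
      push_cast
      congr 1
      linear_combination -I_sq
    simp only [zero_add, this]
    rw [integral_complex_ofReal, integral_univ_inv_one_add_sq]
    have := I_ne_zero
    field_simp
    ring
  | succ b ih =>
    have h0 : ∫ x, auxf 0 (b + 1 + 1) x = 0 := by
      have := auxf_rec 0 (b + 1) (by omega)
      have hb : ((b : ℂ) + 1) ≠ 0 := by exact_mod_cast Nat.succ_ne_zero b
      push_cast at this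
      rw [zero_mul] at this
      have h2 := mul_eq_zero.1 this.symm
      exact h2.resolve_left (neg_ne_zero.2 hb)
    have e : ∀ x, auxf 1 (b + 1 + 1) x
        = (I + I)⁻¹ * (auxf 1 (b + 1) x - auxf 0 (b + 1 + 1) x) := by
      intro x
      have h1 := aux_nem x
      have h2 := aux_nep x
      have h3 : I + I ≠ 0 := by rw [← two_mul]; simp
      simp only [auxf]
      rw [eq_inv_mul_iff_mul_eq₀ h3]
      field_simp
      ring
    simp only [e]
    rw [integral_const_mul, integral_sub (auxf_int _ _ (by omega)) (auxf_int _ _ (by omega)), ih, h0]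
    rw [pow_succ _ (b + 1), mul_inv]
    ring

lemma aux_derivF (b : ℕ) : deriv (fun z : ℂ => ((z + I) ^ b)⁻¹) =
    fun z => (-b : ℂ) * ((z + I) ^ (b + 1))⁻¹ := by
  funext z
  have := deriv_comp_add_const (fun y : ℂ => y ^ (-(b : ℤ))) I z
  simp only [zpow_neg, zpow_natCast] at this
  rw [this]
  have h2 := deriv_zpow (-(b : ℤ)) (z + I)
  simp only [zpow_neg, zpow_natCast] at h2
  rw [h2]
  have : (-(b : ℤ) - 1) = -((b + 1 : ℕ) : ℤ) := by push_cast; ring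
  rw [this, zpow_neg, zpow_natCast]
  push_cast
  rfl

lemma auxf_main (a : ℕ) : ∀ b : ℕ, 1 ≤ a + b → (Nat.factorial a : ℂ) * ∫ x, auxf (a + 1) b x =
    2 * (Real.pi : ℂ) * I * iteratedDeriv a (fun z : ℂ => ((z + I) ^ b)⁻¹) I := by
  induction a with
  | zero =>
    intro b hb
    obtain ⟨b, rfl⟩ : ∃ c, b = c + 1 := ⟨b - 1, by omega⟩
    simp [auxf_one]
  | succ a ih =>
    intro b hb
    rw [iteratedDeriv_succ', aux_derivF, iteratedDeriv_const_mul_field]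
    have h1 := ih (b + 1) (by omega)
    have h2 := auxf_rec (a + 1) b hb
    rw [Nat.factorial_succ]
    push_cast at h2 ⊢
    linear_combination (Nat.factorial a : ℂ) * h2 - b * h1

theorem stmt7 (m : ℕ) (hm : 1 ≤ m) :
    ∫ x : ℝ, (x : ℂ) / (((x : ℂ) - I) ^ (m + 2) * ((x : ℂ) + I) ^ m) =
      (2 * (Real.pi : ℂ) * I / (Nat.factorial (m + 1) : ℂ)) *
        iteratedDeriv (m + 1) (fun z : ℂ => z / (z + I) ^ m) I := by
  obtain ⟨k, rfl⟩ : ∃ c, m = c + 1 := ⟨m - 1, by omega⟩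
  have hI : I + I ≠ 0 := by rw [← two_mul]; simp
  have e : ∀ x : ℝ, (x : ℂ) / (((x : ℂ) - I) ^ (k + 1 + 2) * ((x : ℂ) + I) ^ (k + 1))
      = auxf (k + 1 + 1 + 1) k x - I * auxf (k + 1 + 1 + 1) (k + 1) x := by
    intro x
    have h1 := aux_nem x
    have h2 := aux_nep x
    simp only [auxf]
    field_simp
    ring
  have cd : ∀ b : ℕ, ContDiffAt ℂ ((k + 1 + 1 : ℕ) : ℕ∞) (fun z : ℂ => ((z + I) ^ b)⁻¹) I := by
    intro b
    exact ContDiffAt.inv (by fun_prop) (pow_ne_zero _ hI)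
  have eg : (fun z : ℂ => z / (z + I) ^ (k + 1)) =ᶠ[nhds I]
      (fun z : ℂ => ((z + I) ^ k)⁻¹ - I * ((z + I) ^ (k + 1))⁻¹) := by
    have : ∀ᶠ z : ℂ in nhds I, z + I ≠ 0 :=
      ContinuousAt.eventually_ne (by fun_prop) hI
    filter_upwards [this] with z hz
    field_simp
    ring
  have hd : iteratedDeriv (k + 1 + 1) (fun z : ℂ => z / (z + I) ^ (k + 1)) I =
      iteratedDeriv (k + 1 + 1) (fun z : ℂ => ((z + I) ^ k)⁻¹) I
      - I * iteratedDeriv (k + 1 + 1) (fun z : ℂ => ((z + I) ^ (k + 1))⁻¹) I := by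
    rw [eg.iteratedDeriv_eq]
    have := iteratedDeriv_fun_sub (n := k + 1 + 1) (cd k) (contDiffAt_const (c := I) |>.mul (cd (k + 1)))
    rw [← iteratedDeriv_const_mul_field]
    exact this
  simp only [e]
  rw [integral_sub (auxf_int _ _ (by omega)) ((auxf_int _ _ (by omega)).const_mul _),
    integral_const_mul, hd]
  have h1 := auxf_main (k + 1 + 1) k (by omega)
  have h2 := auxf_main (k + 1 + 1) (k + 1) (by omega)
  have hf : (Nat.factorial (k + 1 + 1) : ℂ) ≠ 0 := by exact_mod_cast Nat.factorial_ne_zero _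
  rw [div_mul_eq_mul_div, eq_div_iff hf]
  linear_combination h1 - I * h2
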